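/- For every integer n ≥ 1 and every 0 ≤ k ≤ n, the residue classes of the monomials X_I, where I ranges over the admissible k-element subsets of {1,…,2n}, form a ℤ-basis of the degree-2k component (R_n)_{2k}. Consequently, the residue classes of the X_I over all admissible subsets I ⊆ {1,…,2n} form a ℤ-basis of R_n as an abelian group. -/

import Mathlib

/-!
In `R_n` the product `∏ (1 + X_i s)` over all `i` is `1`, and `(1 + X_i s)(1 - X_i s) = 1`. So for
every set `T` the product of `1 + X_i s` over `T` equals the product of `1 - X_i s` over the
complement of `T`, and comparing coefficients of `s ^ |T|` writes `X_T` as `±` the sum of the `X_J`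
with `J` disjoint from `T` and `|J| = |T|` (`prod_eq_sum_compl`).

*Spanning.* If `I` violates admissibility at `m`, let `T = I ∩ {1,…,m}`. As `2|T| > m`, every
`J` above has an element `> m`, so rewriting `X_T` replaces `I` by sets of the same size that are
strictly larger in the colexicographic order. Induction on that order shows that the admissible
monomials of size `k` span the degree-`2k` part (`mk_prod_mem_span`).

*Independence.* For admissible `T`, Hall's theorem gives an injection `u : T → Tᶜ` with `u t < t`
(`exists_matching`). Sending `X_t ↦ X_t`, `X_{u t} ↦ -X_t` for `t ∈ T` and all other variables
to `0` defines a ring homomorphism from `R_n` to `ℤ[X] / (X_i ^ 2)`, because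
`(1 + X_t s)(1 - X_t s) = 1` there (`relIdeal_le_comap`). It kills `X_I` whenever `I` is
colexicographically larger than `T` (`aeval_mem_sqIdeal`) and sends `X_T` to `X_T`, a non-torsion
element. Hence the admissible monomials are unitriangular with respect to these homomorphisms.
-/

/-!
Context: R_n = ℤ[X_1,…,X_{2n}]/I_n, graded with deg X_i = 2; (R_n)_{2k} is the image
of the homogeneous polynomials of standard degree k.  A subset I ⊆ {1,…,2n} is
admissible if |I ∩ {1,…,m}| ≤ m/2 for every m = 1,…,2n.  (We model {1,…,2n} by
Fin (2n), with i ∈ Fin (2n) corresponding to i+1 ∈ {1,…,2n}.)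

Statement 2:  For 0 ≤ k ≤ n, the classes of the monomials X_I for admissible
k-element subsets I form a ℤ-basis of (R_n)_{2k}; and the classes of the X_I over all
admissible I form a ℤ-basis of R_n.
-/

open MvPolynomial

noncomputable section

/-- The ideal I_n generated by the squares of the variables and the elementary
symmetric polynomials in 2n variables. -/
def relIdeal (n : ℕ) : Ideal (MvPolynomial (Fin (2 * n)) ℤ) :=
  Ideal.span
    ((Set.range fun i : Fin (2 * n) => (X i : MvPolynomial (Fin (2 * n)) ℤ) ^ 2) ∪
      {p | ∃ k : ℕ, 1 ≤ k ∧ k ≤ 2 * n ∧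
        p = ∑ I ∈ Finset.powersetCard k (Finset.univ : Finset (Fin (2 * n))), ∏ i ∈ I, X i})

/-- The ring R_n = ℤ[X_1,…,X_{2n}]/I_n. -/
abbrev Rn (n : ℕ) := MvPolynomial (Fin (2 * n)) ℤ ⧸ relIdeal n

/-- The degree-2k homogeneous component of R_n (deg X_i = 2), as a ℤ-submodule:
the image of the homogeneous polynomials of standard degree k. -/
def componentM (n k : ℕ) : Submodule ℤ (Rn n) :=
  Submodule.map (Ideal.Quotient.mkₐ ℤ (relIdeal n)).toLinearMap
    (homogeneousSubmodule (Fin (2 * n)) ℤ k)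

/-- Admissibility: |I ∩ {1,…,m}| ≤ m/2 for all m = 1,…,2n (elements of Fin (2n)
correspond to {1,…,2n} via i ↦ i+1). -/
def admissible (n : ℕ) (I : Finset (Fin (2 * n))) : Prop :=
  ∀ m ∈ Finset.Icc 1 (2 * n), 2 * (I.filter fun i : Fin (2 * n) => (i : ℕ) + 1 ≤ m).card ≤ m

/-- The class in R_n of the squarefree monomial X_I, for an admissible k-element
subset I. -/
def vK (n k : ℕ) (I : {I : Finset (Fin (2 * n)) // admissible n I ∧ I.card = k}) : Rn n :=
  Ideal.Quotient.mk (relIdeal n) (∏ i ∈ I.1, X i)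

/-- The class in R_n of the squarefree monomial X_I, for an admissible subset I. -/
def vA (n : ℕ) (I : {I : Finset (Fin (2 * n)) // admissible n I}) : Rn n :=
  Ideal.Quotient.mk (relIdeal n) (∏ i ∈ I.1, X i)

/-! ### Generating function of the elementary symmetric polynomials -/

section GeneratingFunction

variable {ι B : Type*} [CommRing B]

lemma coeff_prod_one_add (f : ι → B) (S : Finset ι) (k : ℕ) :
    (∏ i ∈ S, (1 + Polynomial.C (f i) * Polynomial.X)).coeff k =
      ∑ I ∈ S.powersetCard k, ∏ i ∈ I, f i := by
  classical
  rw [Finset.prod_one_add, Polynomial.finsetSum_coeff, Finset.powersetCard_eq_filter,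
    Finset.sum_filter]
  refine Finset.sum_congr rfl fun I _ => ?_
  rw [Finset.prod_mul_distrib, Finset.prod_const, ← map_prod, Polynomial.coeff_C_mul,
    Polynomial.coeff_X_pow]
  simp [eq_comm]

lemma one_add_mul_one_sub {b : B} (hb : b ^ 2 = 0) :
    (1 + Polynomial.C b * Polynomial.X) * (1 + Polynomial.C (-b) * Polynomial.X) = 1 := by
  have : (Polynomial.C b) ^ 2 = 0 := by rw [← map_pow, hb, map_zero]
  rw [map_neg]
  linear_combination (-Polynomial.X ^ 2) * this

/-- If the `f i` square to zero and all their elementary symmetric functions of positive degree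
vanish (`hprod`, in generating-function form), then the monomial of `T` is, up to sign, the elementary symmetric function of degree `|T|`
in the complementary variables. -/
lemma prod_eq_sum_compl [Fintype ι] [DecidableEq ι] (f : ι → B) (hsq : ∀ i, f i ^ 2 = 0)
    (hprod : ∏ i, (1 + Polynomial.C (f i) * Polynomial.X) = 1) (T : Finset ι) :
    ∏ i ∈ T, f i = ∑ J ∈ Tᶜ.powersetCard T.card, ∏ i ∈ J, -f i := by
  have h1 : ∏ i ∈ T, (1 + Polynomial.C (f i) * Polynomial.X) =
      ∏ i ∈ Tᶜ, (1 + Polynomial.C (-f i) * Polynomial.X) := by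
    have h2 : (∏ i ∈ Tᶜ, (1 + Polynomial.C (f i) * Polynomial.X)) *
        ∏ i ∈ Tᶜ, (1 + Polynomial.C (-f i) * Polynomial.X) = 1 := by
      rw [← Finset.prod_mul_distrib]
      exact Finset.prod_eq_one fun i _ => one_add_mul_one_sub (hsq i)
    rw [← Finset.prod_mul_prod_compl T] at hprod
    exact left_inv_eq_right_inv hprod h2
  have h3 := congrArg (fun p => Polynomial.coeff p T.card) h1
  simpa only [coeff_prod_one_add, Finset.powersetCard_self, Finset.sum_singleton] using h3

end GeneratingFunction

/-! ### Spanning -/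

section Span

variable {n : ℕ}

/-- The class of a variable in `R_n`. -/
def xcl (n : ℕ) (i : Fin (2 * n)) : Rn n := Ideal.Quotient.mk (relIdeal n) (X i)

lemma xcl_sq (i : Fin (2 * n)) : xcl n i ^ 2 = 0 := by
  rw [xcl, ← map_pow, Ideal.Quotient.eq_zero_iff_mem]
  exact Ideal.subset_span (Or.inl ⟨i, rfl⟩)

lemma mk_prod (I : Finset (Fin (2 * n))) :
    Ideal.Quotient.mk (relIdeal n) (∏ i ∈ I, X i) = ∏ i ∈ I, xcl n i := by
  rw [map_prod]; rfl

lemma prod_xcl_eq_one : ∏ i, (1 + Polynomial.C (xcl n i) * Polynomial.X) = 1 := by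
  ext k
  rw [coeff_prod_one_add, Polynomial.coeff_one]
  rcases Nat.eq_zero_or_pos k with rfl | hk
  · simp
  rw [if_neg hk.ne']
  by_cases hkn : k ≤ 2 * n
  · simp_rw [← mk_prod]
    rw [← map_sum, Ideal.Quotient.eq_zero_iff_mem]
    exact Ideal.subset_span (Or.inr ⟨k, hk, hkn, rfl⟩)
  · rw [Finset.powersetCard_eq_empty.2 (by simpa using hkn), Finset.sum_empty]

/-- The induction runs downwards along the colexicographic order: the class of a non-admissible
`X_I` is a combination of monomials of the same size that are colexicographically larger. -/
lemma mk_prod_mem_span (I : Finset (Fin (2 * n))) :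
    ∏ i ∈ I, xcl n i ∈ Submodule.span ℤ (Set.range (vK n I.card)) := by
  classical
  suffices h : ∀ c : Colex (Finset (Fin (2 * n))), ∏ i ∈ ofColex c, xcl n i ∈
      Submodule.span ℤ (Set.range (vK n (ofColex c).card)) from h (toColex I)
  intro c
  have : Finite (Colex (Finset (Fin (2 * n)))) := Finite.of_equiv _ toColex
  induction c using WellFoundedGT.induction with
  | _ c ih =>
  set I : Finset (Fin (2 * n)) := ofColex c with hI
  by_cases hadm : admissible n I
  · exact Submodule.subset_span ⟨⟨I, hadm, rfl⟩, mk_prod I⟩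
  obtain ⟨m, -, hlt⟩ : ∃ m ∈ Finset.Icc 1 (2 * n),
      m < 2 * (I.filter fun i : Fin (2 * n) => (i : ℕ) + 1 ≤ m).card := by
    simpa only [admissible, not_forall, not_le, exists_prop] using hadm
  set T := I.filter fun i : Fin (2 * n) => (i : ℕ) + 1 ≤ m with hT
  have hTI : T ⊆ I := Finset.filter_subset _ _
  rw [← Finset.prod_sdiff hTI, prod_eq_sum_compl (xcl n) xcl_sq prod_xcl_eq_one T,
    Finset.mul_sum]
  refine Submodule.sum_mem _ fun J hJ => ?_
  obtain ⟨hJT, hJc⟩ := Finset.mem_powersetCard.1 hJ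
  have hdJT : Disjoint J T := Finset.subset_compl_iff_disjoint_right.1 hJT
  have hneg : ∏ i ∈ J, -xcl n i = (-1) ^ J.card * ∏ i ∈ J, xcl n i := by
    simp_rw [← neg_one_mul (xcl n _)]
    rw [Finset.prod_mul_distrib, Finset.prod_const]
  rw [hneg, mul_left_comm]
  have hsign : ∀ x : Rn n, x ∈ Submodule.span ℤ (Set.range (vK n I.card)) →
      (-1) ^ J.card * x ∈ Submodule.span ℤ (Set.range (vK n I.card)) := by
    intro x hx
    rcases neg_one_pow_eq_or (Rn n) J.card with h | h <;> simpa [h] using hx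
  apply hsign
  by_cases hdisj : Disjoint (I \ T) J
  · rw [← Finset.prod_union hdisj]
    have hcard : ((I \ T) ∪ J).card = I.card := by
      rw [Finset.card_union_of_disjoint hdisj, hJc, Finset.card_sdiff_add_card_eq_card hTI]
    -- `J` and `T` are disjoint of total size `> m`, so they do not both fit into `{1,…,m}`.
    obtain ⟨b, hbJ, hbm⟩ : ∃ b ∈ J, m ≤ (b : ℕ) := by
      by_contra! hcon
      have h1 : (J ∪ T).card ≤ (Finset.range m).card := by
        refine Finset.card_le_card_of_injOn (fun i => (i : ℕ)) ?_ Fin.val_injective.injOn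
        intro i hi
        rcases Finset.mem_union.1 hi with h | h
        · simpa using hcon i h
        · simpa using (Finset.mem_filter.1 h).2
      rw [Finset.card_union_of_disjoint hdJT, Finset.card_range] at h1
      omega
    have hbI : b ∉ I := fun h => Finset.disjoint_left.1 hdisj
      (Finset.mem_sdiff.2 ⟨h, Finset.disjoint_left.1 hdJT hbJ⟩) hbJ
    have hlt' : c < toColex ((I \ T) ∪ J) := by
      refine lt_of_le_of_ne (Finset.Colex.toColex_le_toColex.2 fun a ha ha' =>
        ⟨b, Finset.mem_union_right _ hbJ, hbI, ?_⟩) ?_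
      · have haT : a ∈ T := by
          by_contra h
          exact ha' (Finset.mem_union_left _ (Finset.mem_sdiff.2 ⟨ha, h⟩))
        have := (Finset.mem_filter.1 haT).2
        rw [Fin.le_def]; omega
      · intro h
        apply hbI
        rw [hI, h]
        exact Finset.mem_union_right _ hbJ
    have := ih _ hlt'
    rw [ofColex_toColex, hcard] at this
    exact this
  · obtain ⟨a, ha, haJ⟩ := Finset.not_disjoint_iff.1 hdisj
    have h0 : (∏ i ∈ I \ T, xcl n i) * ∏ i ∈ J, xcl n i = 0 := by
      rw [← Finset.mul_prod_erase _ _ ha, ← Finset.mul_prod_erase _ _ haJ]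
      linear_combination (∏ i ∈ (I \ T).erase a, xcl n i) * (∏ i ∈ J.erase a, xcl n i) * xcl_sq a
    rw [h0]
    exact Submodule.zero_mem _

/-- Every monomial of degree `k` has class in the span of the admissible `X_I` with `|I| = k`: it is
either squarefree or divisible by some `X_i ^ 2`. -/
lemma mk_monomial_mem_span (d : Fin (2 * n) →₀ ℕ) (r : ℤ) :
    Ideal.Quotient.mk (relIdeal n) (monomial d r) ∈
      Submodule.span ℤ (Set.range (vK n d.degree)) := by
  classical
  have hr : (Ideal.Quotient.mk (relIdeal n) (monomial d r)) =
      r • ∏ i ∈ d.support, xcl n i ^ d i := by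
    rw [monomial_eq, map_mul, Finsupp.prod, map_prod, zsmul_eq_mul]
    simp [xcl]
  rw [hr]
  refine Submodule.smul_mem _ _ ?_
  by_cases hd : ∀ i, d i ≤ 1
  · have h1 : ∀ i ∈ d.support, d i = 1 := fun i hi => by
      have := hd i
      have := Finsupp.mem_support_iff.1 hi
      omega
    have h2 : ∏ i ∈ d.support, xcl n i ^ d i = ∏ i ∈ d.support, xcl n i :=
      Finset.prod_congr rfl fun i hi => by rw [h1 i hi, pow_one]
    have h3 : d.degree = d.support.card := by
      rw [Finsupp.degree_apply, Finset.sum_congr rfl h1]; simp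
    rw [h2, h3]
    exact mk_prod_mem_span _
  · push Not at hd
    obtain ⟨i, hi⟩ := hd
    have h0 : xcl n i ^ d i = 0 := pow_eq_zero_of_le hi (xcl_sq i)
    rw [Finset.prod_eq_zero (Finsupp.mem_support_iff.2 (by omega : d i ≠ 0)) h0]
    exact Submodule.zero_mem _

lemma span_vK (k : ℕ) : Submodule.span ℤ (Set.range (vK n k)) = componentM n k := by
  apply le_antisymm
  · rw [Submodule.span_le]
    rintro _ ⟨⟨I, hI, rfl⟩, rfl⟩
    refine ⟨∏ i ∈ I, X i, ?_, rfl⟩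
    have := IsHomogeneous.prod I (fun i => (X i : MvPolynomial (Fin (2 * n)) ℤ)) (fun _ => 1)
      fun i _ => isHomogeneous_X ℤ i
    simpa using this
  · rintro _ ⟨p, hp, rfl⟩
    have hp' : p.IsHomogeneous k := hp
    rw [p.as_sum, map_sum]
    refine Submodule.sum_mem _ fun d hd => ?_
    have hdk : d.degree = k := by
      rw [Finsupp.degree_eq_weight_one]
      exact hp' (mem_support_iff.1 hd)
    rw [← hdk]
    exact mk_monomial_mem_span d _

lemma span_vA : Submodule.span ℤ (Set.range (vA n)) = ⊤ := by
  rw [eq_top_iff]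
  intro x _
  obtain ⟨p, rfl⟩ := Ideal.Quotient.mk_surjective x
  rw [p.as_sum, map_sum]
  refine Submodule.sum_mem _ fun d _ => ?_
  refine Submodule.span_mono ?_ (mk_monomial_mem_span d _)
  rintro _ ⟨⟨I, hI, _⟩, rfl⟩
  exact ⟨⟨I, hI⟩, rfl⟩

end Span

/-! ### Linear independence -/

section Independence

variable {n : ℕ}

/-- The elements of an admissible set can be matched with distinct smaller elements outside of it.
For a subset `S` of `T`, Hall's condition is admissibility at the largest element of `S`. -/
lemma exists_matching {T : Finset (Fin (2 * n))} (hT : admissible n T) :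
    ∃ u : Fin (2 * n) → Fin (2 * n), Set.InjOn u T ∧ ∀ t ∈ T, u t ∉ T ∧ u t < t := by
  classical
  have hall : ∀ S : Finset T, S.card ≤
      (S.biUnion fun t : T => Tᶜ.filter fun v => v < (t : Fin (2 * n))).card := by
    intro S
    rcases S.eq_empty_or_nonempty with rfl | hS
    · simp
    set t := S.max' hS with ht
    have hle : (Finset.Iic t.1 ∩ Tᶜ) ⊆
        S.biUnion fun t : T => Tᶜ.filter fun v => v < (t : Fin (2 * n)) := by
      intro v hv
      obtain ⟨h1, h2⟩ := Finset.mem_inter.1 hv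
      refine Finset.mem_biUnion.2 ⟨t, S.max'_mem hS, Finset.mem_filter.2 ⟨h2, ?_⟩⟩
      refine lt_of_le_of_ne (Finset.mem_Iic.1 h1) fun h => ?_
      exact Finset.mem_compl.1 h2 (h ▸ t.2)
    have hST : S.card ≤ (Finset.Iic t.1 ∩ T).card := by
      rw [← Finset.card_map (Function.Embedding.subtype fun i => i ∈ T)]
      refine Finset.card_le_card fun v hv => ?_
      obtain ⟨s, hs, rfl⟩ := Finset.mem_map.1 hv
      exact Finset.mem_inter.2 ⟨Finset.mem_Iic.2 (S.le_max' s hs), s.2⟩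
    have hadm := hT (t.1 + 1) (Finset.mem_Icc.2 ⟨by omega, t.1.2⟩)
    have hfil : (T.filter fun i : Fin (2 * n) => (i : ℕ) + 1 ≤ t.1 + 1) = Finset.Iic t.1 ∩ T := by
      ext i
      rw [Finset.mem_filter, Finset.mem_inter, Finset.mem_Iic, Fin.le_def, Nat.succ_le_succ_iff,
        and_comm]
    rw [hfil] at hadm
    have hsum : (Finset.Iic t.1 ∩ T).card + (Finset.Iic t.1 ∩ Tᶜ).card = t.1 + 1 := by
      rw [← Fin.card_Iic t.1, ← Finset.sdiff_eq_inter_compl]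
      exact Finset.card_inter_add_card_sdiff _ _
    have := Finset.card_le_card hle
    omega
  obtain ⟨f, hf, hf'⟩ := (Finset.all_card_le_biUnion_card_iff_exists_injective _).1 hall
  refine ⟨fun i => if h : i ∈ T then f ⟨i, h⟩ else i, ?_, ?_⟩
  · intro a ha b hb hab
    have ha' : a ∈ T := ha
    have hb' : b ∈ T := hb
    simp only [ha', hb', dif_pos] at hab
    exact congrArg Subtype.val (hf hab)
  · intro t ht
    simpa [ht] using hf' ⟨t, ht⟩

/-- The ideal of `ℤ[X]` generated by the squares of the variables. -/
def sqIdeal (n : ℕ) : Ideal (MvPolynomial (Fin (2 * n)) ℤ) :=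
  Ideal.span (Set.range fun i => X i ^ 2)

lemma X_sq_mem (i : Fin (2 * n)) : X i ^ 2 ∈ sqIdeal n := Ideal.subset_span ⟨i, rfl⟩

lemma coeff_eq_zero_of_mem_sqIdeal {p : MvPolynomial (Fin (2 * n)) ℤ} (hp : p ∈ sqIdeal n)
    {d : Fin (2 * n) →₀ ℕ} (hd : ∀ i, d i ≤ 1) : coeff d p = 0 := by
  have himg : (Set.range fun i : Fin (2 * n) => (X i : MvPolynomial (Fin (2 * n)) ℤ) ^ 2) =
      (fun s => monomial s (1 : ℤ)) '' Set.range fun i => Finsupp.single i 2 := by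
    rw [← Set.range_comp]
    congr 1
    ext1 i
    exact X_pow_eq_monomial
  rw [sqIdeal, himg, mem_ideal_span_monomial_image] at hp
  by_contra h
  obtain ⟨_, ⟨i, rfl⟩, hi⟩ := hp d (mem_support_iff.2 h)
  have h1 := hi i
  have h2 := hd i
  simp at h1
  omega

/-- The images of the variables under the substitution attached to a matching `u` on `T`:
`X_t ↦ X_t` and `X_{u t} ↦ -X_t` for `t ∈ T`, all other variables going to `0`. -/
def matchVar (T : Finset (Fin (2 * n))) (u : Fin (2 * n) → Fin (2 * n)) (i : Fin (2 * n)) :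
    MvPolynomial (Fin (2 * n)) ℤ :=
  if i ∈ T then X i else ∑ t ∈ T with u t = i, -X t

section Matching

variable {T : Finset (Fin (2 * n))} {u : Fin (2 * n) → Fin (2 * n)}

lemma matchVar_mem {t : Fin (2 * n)} (ht : t ∈ T) : matchVar T u t = X t := if_pos ht

lemma matchVar_match (hu : Set.InjOn u T) (hu' : ∀ t ∈ T, u t ∉ T ∧ u t < t) {t : Fin (2 * n)}
    (ht : t ∈ T) : matchVar T u (u t) = -X t := by
  have : (T.filter fun s => u s = u t) = {t} := by
    ext s
    simp only [Finset.mem_filter, Finset.mem_singleton]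
    exact ⟨fun h => hu h.1 ht h.2, fun h => by subst h; exact ⟨ht, rfl⟩⟩
  rw [matchVar, if_neg (hu' t ht).1, this, Finset.sum_singleton]

lemma matchVar_other {i : Fin (2 * n)} (hi : i ∉ T) (hi' : ∀ t ∈ T, u t ≠ i) :
    matchVar T u i = 0 := by
  rw [matchVar, if_neg hi, Finset.filter_false_of_mem hi', Finset.sum_empty]

lemma matchVar_sq_mem (hu : Set.InjOn u T) (hu' : ∀ t ∈ T, u t ∉ T ∧ u t < t)
    (i : Fin (2 * n)) : matchVar T u i ^ 2 ∈ sqIdeal n := by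
  by_cases hi : i ∈ T
  · rw [matchVar_mem hi]
    exact X_sq_mem i
  by_cases hi' : ∃ t ∈ T, u t = i
  · obtain ⟨t, ht, rfl⟩ := hi'
    rw [matchVar_match hu hu' ht, neg_sq]
    exact X_sq_mem t
  · push Not at hi'
    rw [matchVar_other hi hi']
    simp

/-- The substitution of a matching respects the defining relations of `R_n`: modulo squares, the
generating function of the elementary symmetric polynomials becomes a product of factors
`(1 + X_t s)(1 - X_t s) = 1`. -/
lemma relIdeal_le_comap (hu : Set.InjOn u T) (hu' : ∀ t ∈ T, u t ∉ T ∧ u t < t) :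
    relIdeal n ≤ (sqIdeal n).comap (aeval (matchVar T u) : _ →ₐ[ℤ] _) := by
  classical
  let q : MvPolynomial (Fin (2 * n)) ℤ →+* MvPolynomial (Fin (2 * n)) ℤ ⧸ sqIdeal n :=
    Ideal.Quotient.mk (sqIdeal n)
  have hprod : ∏ i, (1 + Polynomial.C (q (matchVar T u i)) * Polynomial.X) = 1 := by
    have hsub : T.image u ⊆ Tᶜ := by
      intro i hi
      obtain ⟨t, ht, rfl⟩ := Finset.mem_image.1 hi
      exact Finset.mem_compl.2 (hu' t ht).1
    have himg : ∏ i ∈ Tᶜ, (1 + Polynomial.C (q (matchVar T u i)) * Polynomial.X) =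
        ∏ i ∈ T.image u, (1 + Polynomial.C (q (matchVar T u i)) * Polynomial.X) := by
      refine (Finset.prod_subset hsub fun i hi hi' => ?_).symm
      rw [matchVar_other (Finset.mem_compl.1 hi)
        fun t ht h => hi' (Finset.mem_image.2 ⟨t, ht, h⟩)]
      simp
    rw [← Finset.prod_mul_prod_compl T, himg, Finset.prod_image hu, ← Finset.prod_mul_distrib]
    refine Finset.prod_eq_one fun t ht => ?_
    rw [matchVar_mem ht, matchVar_match hu hu' ht, map_neg]
    exact one_add_mul_one_sub
      (by rw [← map_pow]; exact Ideal.Quotient.eq_zero_iff_mem.2 (X_sq_mem t))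
  rw [relIdeal, Ideal.span_le]
  rintro _ (⟨i, rfl⟩ | ⟨k, hk, -, rfl⟩)
  · simpa using matchVar_sq_mem hu hu' i
  · have h := congrArg (fun p => Polynomial.coeff p k) hprod
    simp only [coeff_prod_one_add, Polynomial.coeff_one, if_neg (Nat.one_le_iff_ne_zero.1 hk)] at h
    simp only [SetLike.mem_coe, Ideal.mem_comap, map_sum, map_prod, aeval_X]
    rw [← Ideal.Quotient.eq_zero_iff_mem, map_sum]
    simpa only [map_prod] using h

/-- If `I` is not colexicographically `≤ T`, there is `a ∈ I \ T` such that every `b ≥ a` in `T`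
lies in `I`. Either `a` is unmatched and its variable goes to `0`, or `a = u t` with `t ∈ I` and
the image of `X_I` is divisible by `X_t ^ 2`. -/
lemma aeval_mem_sqIdeal (hu : Set.InjOn u T) (hu' : ∀ t ∈ T, u t ∉ T ∧ u t < t)
    {I : Finset (Fin (2 * n))} (hI : toColex T < toColex I) :
    aeval (matchVar T u) (∏ i ∈ I, X i : MvPolynomial (Fin (2 * n)) ℤ) ∈ sqIdeal n := by
  classical
  have h := not_le_of_gt hI
  rw [Finset.Colex.toColex_le_toColex] at h
  push Not at h
  obtain ⟨a, haI, haT, hab⟩ := h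
  simp only [map_prod, aeval_X]
  by_cases ha : ∃ t ∈ T, u t = a
  · obtain ⟨t, ht, rfl⟩ := ha
    have htI : t ∈ I := by
      by_contra h
      exact absurd (hab t ht h) (not_lt_of_gt (hu' t ht).2)
    have hne : u t ≠ t := (hu' t ht).2.ne
    rw [← Finset.mul_prod_erase _ _ htI,
      ← Finset.mul_prod_erase _ _ (Finset.mem_erase.2 ⟨hne, haI⟩), matchVar_mem ht,
      matchVar_match hu hu' ht, ← mul_assoc]
    refine Ideal.mul_mem_right _ _ ?_
    have := (sqIdeal n).neg_mem (X_sq_mem t)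
    rwa [sq, ← mul_neg] at this
  · push Not at ha
    rw [Finset.prod_eq_zero haI (matchVar_other haT ha)]
    exact Ideal.zero_mem _

end Matching

lemma linearIndependent_vA : LinearIndependent ℤ (vA n) := by
  classical
  rw [linearIndependent_iff']
  intro s g hg
  have hmem : ∑ I ∈ s, g I • ∏ i ∈ I.1, X i ∈ relIdeal n := by
    rw [← Ideal.Quotient.eq_zero_iff_mem, map_sum, ← hg]
    refine Finset.sum_congr rfl fun I _ => ?_
    rw [map_zsmul]
    rfl
  suffices h : ∀ c : Colex (Finset (Fin (2 * n))), ∀ hc : admissible n (ofColex c),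
      ⟨ofColex c, hc⟩ ∈ s → g ⟨ofColex c, hc⟩ = 0 from fun I hI => h (toColex I.1) I.2 hI
  intro c
  have : Finite (Colex (Finset (Fin (2 * n)))) := Finite.of_equiv _ toColex
  induction c using WellFoundedLT.induction with
  | _ c ih =>
  obtain ⟨T, rfl⟩ : ∃ T, toColex T = c := ⟨ofColex c, rfl⟩
  intro hc hcs
  rw [ofColex_toColex] at hc
  change ⟨T, hc⟩ ∈ s at hcs
  change g ⟨T, hc⟩ = 0
  obtain ⟨u, hu, hu'⟩ := exists_matching hc
  have h1 := relIdeal_le_comap hu hu' hmem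
  rw [Ideal.mem_comap, map_sum, ← Finset.add_sum_erase _ _ hcs] at h1
  have h2 : ∑ I ∈ s.erase ⟨T, hc⟩,
      aeval (matchVar T u) (g I • ∏ i ∈ I.1, X i : MvPolynomial (Fin (2 * n)) ℤ) ∈ sqIdeal n := by
    refine Ideal.sum_mem _ fun I hI => ?_
    obtain ⟨hne, hIs⟩ := Finset.mem_erase.1 hI
    rw [map_zsmul]
    rcases lt_trichotomy (toColex I.1) (toColex T) with h | h | h
    · rw [show g I = 0 from ih _ h I.2 hIs, zero_smul]
      exact Ideal.zero_mem _
    · exact absurd (Subtype.ext (toColex_inj.1 h)) hne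
    · exact Submodule.smul_of_tower_mem _ _ (aeval_mem_sqIdeal hu hu' h)
  have h3 := (Ideal.add_mem_iff_left _ h2).1 h1
  have h4 : aeval (matchVar T u) (g ⟨T, hc⟩ • ∏ i ∈ T, X i : MvPolynomial (Fin (2 * n)) ℤ) =
      monomial (∑ i ∈ T, Finsupp.single i 1) (g ⟨T, hc⟩) := by
    rw [map_zsmul, map_prod, Finset.prod_congr rfl fun i hi => (by
      rw [aeval_X, matchVar_mem hi] : aeval (matchVar T u) (X i) = X i)]
    have h5 : monomial (∑ i ∈ T, Finsupp.single i 1) (1 : ℤ) = ∏ i ∈ T, X i := monomial_sum_one _ _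
    rw [← h5, smul_monomial, smul_eq_mul, mul_one]
  rw [h4] at h3
  have h5 := coeff_eq_zero_of_mem_sqIdeal h3 (d := ∑ i ∈ T, Finsupp.single i 1) fun i => by
    rw [Finsupp.finsetSum_apply]
    simp only [Finsupp.single_apply, Finset.sum_ite_eq']
    split_ifs <;> simp
  simpa using h5

lemma linearIndependent_vK (k : ℕ) : LinearIndependent ℤ (vK n k) :=
  linearIndependent_vA.comp
    (fun I : {I : Finset (Fin (2 * n)) // admissible n I ∧ I.card = k} => ⟨I.1, I.2.1⟩)
    fun _ _ h => Subtype.ext (congrArg (fun K => K.1) h)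

end Independence

/-- For 0 ≤ k ≤ n, the classes of the monomials X_I over admissible
k-element subsets I are linearly independent over ℤ and span exactly the degree-2k
component of R_n (i.e. form a ℤ-basis of it); and the classes of the X_I over all
admissible I are linearly independent and span R_n (i.e. form a ℤ-basis of R_n). -/
theorem stmt2 (n k : ℕ) (hn : 1 ≤ n) (hk : k ≤ n) :
    (LinearIndependent ℤ (vK n k) ∧
      Submodule.span ℤ (Set.range (vK n k)) = componentM n k) ∧
    (LinearIndependent ℤ (vA n) ∧
      Submodule.span ℤ (Set.range (vA n)) = ⊤) := by
  exact ⟨⟨linearIndependent_vK k, span_vK k⟩, linearIndependent_vA, span_vA⟩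

end
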